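/- arXiv:2406.01051 — 2 statements merged into one kernel-verified Lean document; each statement's English description precedes it below -/
import Mathlib

section
/- Let W_m = W' + mS_N(e,s) be a fat flat subscheme of P^N as in the construction, i.e. I(W_m) = (⋂_{i=2}^N ⋂_{r=1}^{n_i} I(M_{i,r})^{m_{i,r}}) ∩ I^{(m)}, where I is the star configuration ideal, each M_{i,r} is a linear subspace of codimension i contained in one of the hyperplanes H_j, no one of the subspaces M_{i,r} and the star-configuration components contains another, and 0 ≤ m_{i,r} ≤ ⌊m/e⌋ for all i,r. Then the Waldschmidt constant of I(W_m) equals ms/e. -/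
noncomputable section

open MvPolynomial

/-- `alpha J` is the least degree of a nonzero homogeneous form in the ideal `J`. -/
def alpha {kk : Type*} [Field kk] {σ : Type*} (J : Ideal (MvPolynomial σ kk)) : ℕ :=
  sInf {d : ℕ | ∃ f ∈ J, f ≠ 0 ∧ MvPolynomial.IsHomogeneous f d}

/-!
Let `f ≠ 0` vanish to order `t T` along the flat `⋂_{i ∈ T} H_i` for each `e`-subset `T` of the `s`
hyperplanes. Then `∑_T t T ≤ C(s - 1, e - 1) · deg f`; for constant `t = n` this reads
`n s ≤ e · deg f`, the lower bound. To prove it, note that dividing `f` by some `ℓ i` changes both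
sides compatibly, so one may assume that no `ℓ i` divides `f`. Then `f` restricts to a nonzero
polynomial on every `H_i`, where induction on `e` bounds the sum over the sets `T ∋ i`; summing over
`i` counts each `T` exactly `e` times.

The upper bound comes from the form `(∏ ℓ i) ^ m`, which lies in the `e`-th symbolic power because
every extra component lies in some `H_i` and has multiplicity at most `m / e`.
-/

section Dilation

variable {R σ : Type*} [CommRing R] {A : Set (MvPolynomial σ R)}
  {q : MvPolynomial σ R →ₗ[R] MvPolynomial σ R} {f : MvPolynomial σ R}

/-- The substitution `x ↦ (x - q x) + T · q x` on the variables `x`, with values in polynomials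
in `T`. When `q` projects onto the span of a set `A` of linear forms, this is the deformation to
the normal cone of the flat cut out by `A`, and the order of vanishing along that flat becomes
the order in `T`. -/
def dilation (q : MvPolynomial σ R →ₗ[R] MvPolynomial σ R) :
    MvPolynomial σ R →ₐ[R] Polynomial (MvPolynomial σ R) :=
  aeval fun i => Polynomial.C (X i - q (X i)) + Polynomial.X * Polynomial.C (q (X i))

/-- The value of `dilation q` at `T = 0`. When `q` projects onto the span of a set of linear
forms, this is the restriction of polynomials to the flat they cut out, followed by pullback along
a linear retraction onto that flat. -/
def flatRestriction (q : MvPolynomial σ R →ₗ[R] MvPolynomial σ R) :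
    MvPolynomial σ R →ₐ[R] MvPolynomial σ R :=
  aeval fun i => X i - q (X i)

theorem dilation_of_isHomogeneous_one (q : MvPolynomial σ R →ₗ[R] MvPolynomial σ R)
    (hf : f.IsHomogeneous 1) :
    dilation q f = Polynomial.C (f - q f) + Polynomial.X * Polynomial.C (q f) := by
  rw [← mem_homogeneousSubmodule, homogeneousSubmodule_one_eq_span_X] at hf
  induction hf using Submodule.span_induction with
  | mem x hx =>
    obtain ⟨i, rfl⟩ := hx
    simp [dilation]
  | zero => simp
  | add x y _ _ hx hy =>
    simp only [map_add, map_sub, hx, hy]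
    ring
  | smul a x _ hx =>
    simp only [map_smul, hx, ← smul_sub, ← Polynomial.smul_C, smul_add, mul_smul_comm]

theorem coeff_zero_dilation (q : MvPolynomial σ R →ₗ[R] MvPolynomial σ R)
    (f : MvPolynomial σ R) : (dilation q f).coeff 0 = flatRestriction q f := by
  have hcomp : (Polynomial.constantCoeff (R := MvPolynomial σ R)).comp (dilation q).toRingHom =
      (flatRestriction q).toRingHom := by
    ext <;> simp [dilation, flatRestriction, Polynomial.algebraMap_apply]
  exact RingHom.congr_fun hcomp f

theorem eval_one_dilation (q : MvPolynomial σ R →ₗ[R] MvPolynomial σ R)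
    (f : MvPolynomial σ R) : (dilation q f).eval 1 = f := by
  have hcomp : (Polynomial.evalRingHom 1).comp (dilation q).toRingHom =
      RingHom.id (MvPolynomial σ R) := by
    ext <;> simp [dilation, Polynomial.algebraMap_apply]
  exact RingHom.congr_fun hcomp f

theorem flatRestriction_of_isHomogeneous_one (q : MvPolynomial σ R →ₗ[R] MvPolynomial σ R)
    (hf : f.IsHomogeneous 1) : flatRestriction q f = f - q f := by
  simp [← coeff_zero_dilation, dilation_of_isHomogeneous_one q hf]

theorem dilation_mem_reesAlgebra {I : Ideal (MvPolynomial σ R)} (hq : ∀ f, q f ∈ I)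
    (f : MvPolynomial σ R) : dilation q f ∈ reesAlgebra I := by
  suffices h : (dilation q).range ≤ (reesAlgebra I).restrictScalars R from h ⟨f, rfl⟩
  rw [dilation, aeval_range, Algebra.adjoin_le_iff]
  rintro _ ⟨i, rfl⟩
  refine add_mem (Subalgebra.algebraMap_mem (reesAlgebra I) (X i - q (X i))) ?_
  change Polynomial.X * Polynomial.C (q (X i)) ∈ reesAlgebra I
  rw [mul_comm, Polynomial.C_mul_X_eq_monomial, reesAlgebra.monomial_mem, pow_one]
  exact hq _

theorem isHomogeneous_one_of_mem_span (hA : ∀ a ∈ A, a.IsHomogeneous 1)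
    (hf : f ∈ Submodule.span R A) : f.IsHomogeneous 1 :=
  Submodule.span_le (p := homogeneousSubmodule σ R 1).mpr hA hf

theorem mem_span_of_flatRestriction_eq_zero
    (hq : LinearMap.IsProj (Submodule.span R A) q) (hf : f.IsHomogeneous 1)
    (hf0 : flatRestriction q f = 0) : f ∈ Submodule.span R A := by
  rw [flatRestriction_of_isHomogeneous_one q hf, sub_eq_zero] at hf0
  exact hf0 ▸ hq.map_mem f

theorem dilation_of_mem_span (hA : ∀ a ∈ A, a.IsHomogeneous 1)
    (hq : LinearMap.IsProj (Submodule.span R A) q) (hf : f ∈ Submodule.span R A) :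
    dilation q f = Polynomial.X * Polynomial.C f := by
  simp [dilation_of_isHomogeneous_one q (isHomogeneous_one_of_mem_span hA hf), hq.map_id f hf]

theorem mem_span_pow_iff_X_pow_dvd_dilation (hA : ∀ a ∈ A, a.IsHomogeneous 1)
    (hq : LinearMap.IsProj (Submodule.span R A) q) (t : ℕ) :
    f ∈ Ideal.span A ^ t ↔ Polynomial.X ^ t ∣ dilation q f := by
  constructor
  · intro hf
    have hmap : (Ideal.span A).map (dilation q) ≤ Ideal.span {Polynomial.X} := by
      rw [Ideal.map_span, Ideal.span_le]
      rintro _ ⟨a, ha, rfl⟩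
      rw [SetLike.mem_coe, Ideal.mem_span_singleton,
        dilation_of_mem_span hA hq (Submodule.subset_span ha)]
      exact dvd_mul_right _ _
    rw [← Ideal.mem_span_singleton, ← Ideal.span_singleton_pow]
    refine Ideal.pow_right_mono hmap t ?_
    rw [← Ideal.map_pow]
    exact Ideal.mem_map_of_mem _ hf
  · intro hdvd
    rw [← eval_one_dilation q f, Polynomial.eval_eq_sum, Polynomial.sum]
    refine Ideal.sum_mem _ fun n _ => ?_
    rw [one_pow, mul_one]
    have hqI (f) : q f ∈ Ideal.span A := Submodule.span_le_restrictScalars R _ A (hq.map_mem f)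
    rcases lt_or_ge n t with hnt | htn
    · simp [Polynomial.X_pow_dvd_iff.mp hdvd n hnt]
    · exact Ideal.pow_le_pow_right htn (dilation_mem_reesAlgebra hqI f n)

theorem flatRestriction_eq_zero_iff (hA : ∀ a ∈ A, a.IsHomogeneous 1)
    (hq : LinearMap.IsProj (Submodule.span R A) q) :
    flatRestriction q f = 0 ↔ f ∈ Ideal.span A := by
  rw [← coeff_zero_dilation, ← Polynomial.X_dvd_iff, ← pow_one Polynomial.X,
    ← mem_span_pow_iff_X_pow_dvd_dilation hA hq, pow_one]

theorem isHomogeneous_flatRestriction_X (hA : ∀ a ∈ A, a.IsHomogeneous 1)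
    (hq : LinearMap.IsProj (Submodule.span R A) q) (i : σ) :
    (flatRestriction q (X i)).IsHomogeneous 1 := by
  rw [flatRestriction, aeval_X]
  exact (isHomogeneous_X R i).sub (isHomogeneous_one_of_mem_span hA (hq.map_mem _))

theorem isHomogeneous_flatRestriction (hA : ∀ a ∈ A, a.IsHomogeneous 1)
    (hq : LinearMap.IsProj (Submodule.span R A) q) {d : ℕ} (hf : f.IsHomogeneous d) :
    (flatRestriction q f).IsHomogeneous d := by
  simpa [flatRestriction] using hf.aeval _ fun i => isHomogeneous_flatRestriction_X hA hq i

theorem totalDegree_flatRestriction_le (hA : ∀ a ∈ A, a.IsHomogeneous 1)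
    (hq : LinearMap.IsProj (Submodule.span R A) q) (f : MvPolynomial σ R) :
    (flatRestriction q f).totalDegree ≤ f.totalDegree := by
  conv_lhs => rw [← sum_homogeneousComponent f, map_sum]
  refine totalDegree_finsetSum_le fun d hd => ?_
  have hcomp := isHomogeneous_flatRestriction hA hq (homogeneousComponent_isHomogeneous d f)
  exact hcomp.totalDegree_le.trans (Finset.mem_range_succ_iff.mp hd)

end Dilation

section GeneralPosition

variable {k M M' ι : Type*} [Field k] [AddCommGroup M] [Module k M] [AddCommGroup M'] [Module k M']
  {v : ι → M} {S : Finset ι} {n : ℕ}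

/-- Any at most `n` of the vectors `v i` with `i ∈ S` are linearly independent. -/
def InGeneralPosition (k : Type*) {M ι : Type*} [Field k] [AddCommGroup M] [Module k M]
    (v : ι → M) (S : Finset ι) (n : ℕ) : Prop :=
  ∀ T ⊆ S, T.card ≤ n → LinearIndepOn k v (T : Set ι)

namespace InGeneralPosition

theorem ne_zero (hv : InGeneralPosition k v S (n + 1)) {i : ι} (hi : i ∈ S) : v i ≠ 0 :=
  (hv {i} (by simpa using hi) (by simp)).ne_zero (by simp)

theorem notMem_span (hv : InGeneralPosition k v S (n + 1)) {T : Finset ι} (hTS : T ⊆ S)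
    (hT : T.card ≤ n) {i : ι} (hi : i ∈ S) (hiT : i ∉ T) :
    v i ∉ Submodule.span k (v '' (T : Set ι)) := by
  classical
  have hins := hv (insert i T) (Finset.insert_subset hi hTS)
    ((Finset.card_insert_le i T).trans (Nat.succ_le_succ hT))
  rw [Finset.coe_insert] at hins
  exact hins.notMem_span_of_insert (by simpa using hiT)

theorem map_erase [DecidableEq ι] (hv : InGeneralPosition k v S (n + 1)) {i : ι} (hi : i ∈ S)
    (φ : M →ₗ[k] M')
    (hφ : ∀ w ∈ Submodule.span k (Set.range v), φ w = 0 → w ∈ Submodule.span k {v i}) :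
    InGeneralPosition k (φ ∘ v) (S.erase i) n := by
  intro T hTS hT
  have hiT : i ∉ T := fun h => Finset.notMem_erase i S (hTS h)
  have hins := hv (insert i T) (Finset.insert_subset hi (hTS.trans (Finset.erase_subset i S)))
    ((Finset.card_insert_le i T).trans (Nat.succ_le_succ hT))
  rw [Finset.coe_insert, linearIndepOn_insert (by simpa using hiT)] at hins
  refine LinearIndependent.map hins.1 (Submodule.disjoint_def.mpr fun w hw hw0 => ?_)
  rw [← Set.image_eq_range] at hw
  obtain ⟨a, rfl⟩ := Submodule.mem_span_singleton.mp
    (hφ w (Submodule.span_mono (Set.image_subset_range v T) hw) hw0)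
  by_contra hne
  exact hins.2 ((Submodule.smul_mem_iff _ (left_ne_zero_of_smul hne)).mp hw)

end InGeneralPosition

end GeneralPosition

section PowersetCard

variable {ι M : Type*} [DecidableEq ι] [AddCommMonoid M] {S : Finset ι}

theorem sum_powersetCard_filter_mem {i : ι} (hi : i ∈ S) (r : ℕ) (t : Finset ι → M) :
    ∑ T ∈ S.powersetCard (r + 1) with i ∈ T, t T =
      ∑ T ∈ (S.erase i).powersetCard r, t (insert i T) := by
  have hnot {n : ℕ} {T : Finset ι} (hT : T ∈ (S.erase i).powersetCard n) : i ∉ T := fun h =>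
    Finset.notMem_erase i S ((Finset.mem_powersetCard.mp hT).1 h)
  have hfilter : {T ∈ S.powersetCard (r + 1) | i ∈ T} =
      ((S.erase i).powersetCard r).image (insert i) := by
    rw [← Finset.insert_erase hi, Finset.powersetCard_succ_insert (Finset.notMem_erase i S),
      Finset.filter_union, Finset.filter_false_of_mem fun _ => hnot, Finset.empty_union,
      Finset.erase_insert (Finset.notMem_erase i S), Finset.filter_true_of_mem]
    exact Finset.forall_mem_image.mpr fun T _ => Finset.mem_insert_self i T
  rw [hfilter, Finset.sum_image]
  intro T hT T' hT' h
  rw [← Finset.erase_insert (hnot hT), h, Finset.erase_insert (hnot hT')]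

theorem card_powersetCard_filter_mem {i : ι} (hi : i ∈ S) (r : ℕ) :
    {T ∈ S.powersetCard (r + 1) | i ∈ T}.card = (S.card - 1).choose r := by
  rw [Finset.card_eq_sum_ones, sum_powersetCard_filter_mem hi]
  simp [Finset.card_erase_of_mem hi]

theorem succ_nsmul_sum_powersetCard (S : Finset ι) (r : ℕ) (t : Finset ι → M) :
    (r + 1) • ∑ T ∈ S.powersetCard (r + 1), t T =
      ∑ i ∈ S, ∑ T ∈ (S.erase i).powersetCard r, t (insert i T) := by
  calc (r + 1) • ∑ T ∈ S.powersetCard (r + 1), t T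
      = ∑ T ∈ S.powersetCard (r + 1), ∑ i ∈ S, if i ∈ T then t T else 0 := by
        rw [Finset.smul_sum]
        refine Finset.sum_congr rfl fun T hT => ?_
        obtain ⟨hTS, hT⟩ := Finset.mem_powersetCard.mp hT
        rw [Finset.sum_ite_mem, Finset.inter_eq_right.mpr hTS, Finset.sum_const, hT]
    _ = ∑ i ∈ S, ∑ T ∈ S.powersetCard (r + 1) with i ∈ T, t T := by
        rw [Finset.sum_comm]
        simp only [Finset.sum_filter]
    _ = ∑ i ∈ S, ∑ T ∈ (S.erase i).powersetCard r, t (insert i T) :=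
        Finset.sum_congr rfl fun i hi => sum_powersetCard_filter_mem hi r t

theorem add_two_mul_choose_le (n r : ℕ) :
    (n + 2) * n.choose r ≤ (r + 2) * (n + 1).choose (r + 1) := by
  have hpascal : n.choose r ≤ (n + 1).choose (r + 1) :=
    Nat.choose_succ_succ n r ▸ Nat.le_add_right _ _
  linarith [Nat.add_one_mul_choose_eq n r]

theorem sum_powersetCard_le_of_forall_erase {r d : ℕ} {t : Finset ι → ℕ}
    (hlink : ∀ i ∈ S, ∑ T ∈ (S.erase i).powersetCard (r + 1), t (insert i T) ≤
      ((S.erase i).card - 1).choose r * d) :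
    ∑ T ∈ S.powersetCard (r + 2), t T ≤ (S.card - 1).choose (r + 1) * d := by
  rcases lt_or_ge S.card 2 with hS | hS
  · simp [Finset.powersetCard_eq_empty.mpr (show S.card < r + 2 by omega)]
  obtain ⟨n, hn⟩ := Nat.exists_eq_add_of_le' hS
  refine Nat.le_of_mul_le_mul_left ?_ (Nat.succ_pos (r + 1))
  calc (r + 2) * ∑ T ∈ S.powersetCard (r + 2), t T
      = ∑ i ∈ S, ∑ T ∈ (S.erase i).powersetCard (r + 1), t (insert i T) :=
        succ_nsmul_sum_powersetCard S (r + 1) t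
    _ ≤ ∑ _i ∈ S, n.choose r * d := Finset.sum_le_sum fun i hi => by
        simpa [Finset.card_erase_of_mem hi, hn] using hlink i hi
    _ = (n + 2) * n.choose r * d := by rw [Finset.sum_const, hn, smul_eq_mul, mul_assoc]
    _ ≤ (r + 2) * (n + 1).choose (r + 1) * d := Nat.mul_le_mul_right d (add_two_mul_choose_le n r)
    _ = (r + 2) * ((S.card - 1).choose (r + 1) * d) := by
        rw [hn, mul_assoc, show n + 2 - 1 = n + 1 from rfl]

end PowersetCard

section DegreeBound

variable {k σ ι : Type*} [Field k]

theorem exists_isProj {M : Type*} [AddCommGroup M] [Module k M] (V : Submodule k M) :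
    ∃ q : M →ₗ[k] M, LinearMap.IsProj V q := by
  obtain ⟨p, hp⟩ := LinearMap.exists_extend (LinearMap.id : V →ₗ[k] V)
  exact ⟨V.subtype ∘ₗ p, fun x => (p x).2, fun x hx => congrArg Subtype.val
    (LinearMap.congr_fun hp ⟨x, hx⟩)⟩

section DivisionByForm

variable {A : Set (MvPolynomial σ k)} {l g : MvPolynomial σ k} {t : ℕ}

theorem mem_span_pow_of_mul_mem (hA : ∀ a ∈ A, a.IsHomogeneous 1) (hl : l.IsHomogeneous 1)
    (hlA : l ∉ Submodule.span k A) (h : l * g ∈ Ideal.span A ^ t) : g ∈ Ideal.span A ^ t := by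
  obtain ⟨q, hq⟩ := exists_isProj (Submodule.span k A)
  rw [mem_span_pow_iff_X_pow_dvd_dilation hA hq] at h ⊢
  rw [map_mul] at h
  refine Polynomial.prime_X.pow_dvd_of_dvd_mul_left t (fun hdvd => hlA ?_) h
  rw [Polynomial.X_dvd_iff, coeff_zero_dilation] at hdvd
  exact mem_span_of_flatRestriction_eq_zero hq hl hdvd

theorem mem_span_pow_sub_one_of_mul_mem (hA : ∀ a ∈ A, a.IsHomogeneous 1) (hl0 : l ≠ 0)
    (hlA : l ∈ Submodule.span k A) (h : l * g ∈ Ideal.span A ^ t) :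
    g ∈ Ideal.span A ^ (t - 1) := by
  obtain ⟨q, hq⟩ := exists_isProj (Submodule.span k A)
  rcases t with _ | t
  · simp
  rw [mem_span_pow_iff_X_pow_dvd_dilation hA hq] at h ⊢
  rw [map_mul, dilation_of_mem_span hA hq hlA, pow_succ', mul_assoc,
    mul_dvd_mul_iff_left Polynomial.X_ne_zero] at h
  refine Polynomial.prime_X.pow_dvd_of_dvd_mul_left t ?_ h
  simpa [Polynomial.X_dvd_iff] using hl0

end DivisionByForm

variable {ℓ : ι → MvPolynomial σ k} {S : Finset ι} {r : ℕ} {t : Finset ι → ℕ}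
  {f g : MvPolynomial σ k}

theorem mem_span_image_pow_of_mul_mem [DecidableEq ι] (hℓ : ∀ i, (ℓ i).IsHomogeneous 1)
    (hgen : InGeneralPosition k ℓ S (r + 1)) {i : ι} (hi : i ∈ S) {T : Finset ι} (hTS : T ⊆ S)
    (hT : T.card ≤ r) {n : ℕ} (h : ℓ i * g ∈ Ideal.span (ℓ '' (T : Set ι)) ^ n) :
    g ∈ Ideal.span (ℓ '' (T : Set ι)) ^ (n - if i ∈ T then 1 else 0) := by
  have hA : ∀ a ∈ ℓ '' (T : Set ι), a.IsHomogeneous 1 := Set.forall_mem_image.mpr fun j _ => hℓ j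
  split_ifs with hiT
  · exact mem_span_pow_sub_one_of_mul_mem hA (hgen.ne_zero hi)
      (Submodule.subset_span (Set.mem_image_of_mem ℓ hiT)) h
  · exact mem_span_pow_of_mul_mem hA (hℓ i) (hgen.notMem_span hTS hT hi hiT) h

/-- Dividing `f` by `ℓ i` lowers the degree by one and the multiplicity by one along exactly the
`(S.card - 1).choose r` flats inside the hyperplane `ℓ i = 0`. -/
theorem sum_multiplicities_le_of_forall_not_dvd (hℓ : ∀ i, (ℓ i).IsHomogeneous 1)
    (hgen : InGeneralPosition k ℓ S (r + 2))
    (hbound : ∀ (t : Finset ι → ℕ) (f : MvPolynomial σ k), (∀ i ∈ S, ¬ ℓ i ∣ f) →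
      (∀ T ∈ S.powersetCard (r + 1), f ∈ Ideal.span (ℓ '' (T : Set ι)) ^ t T) →
      ∑ T ∈ S.powersetCard (r + 1), t T ≤ (S.card - 1).choose r * f.totalDegree)
    (hf0 : f ≠ 0)
    (hf : ∀ T ∈ S.powersetCard (r + 1), f ∈ Ideal.span (ℓ '' (T : Set ι)) ^ t T) :
    ∑ T ∈ S.powersetCard (r + 1), t T ≤ (S.card - 1).choose r * f.totalDegree := by
  classical
  induction hd : f.totalDegree using Nat.strong_induction_on generalizing f t with
  | _ d ih =>
  subst hd
  by_cases hdvd : ∃ i ∈ S, ℓ i ∣ f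
  swap
  · exact hbound t f (by simpa using hdvd) hf
  obtain ⟨i, hi, g, rfl⟩ := hdvd
  have hg0 : g ≠ 0 := right_ne_zero_of_mul hf0
  have hdeg : (ℓ i * g).totalDegree = g.totalDegree + 1 := by
    rw [totalDegree_mul_of_isDomain (hgen.ne_zero hi) hg0, (hℓ i).totalDegree (hgen.ne_zero hi),
      add_comm]
  have hg : ∀ T ∈ S.powersetCard (r + 1),
      g ∈ Ideal.span (ℓ '' (T : Set ι)) ^ (t T - if i ∈ T then 1 else 0) := fun T hT => by
    obtain ⟨hTS, hTcard⟩ := Finset.mem_powersetCard.mp hT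
    exact mem_span_image_pow_of_mul_mem hℓ hgen hi hTS hTcard.le (hf T hT)
  calc ∑ T ∈ S.powersetCard (r + 1), t T
      ≤ ∑ T ∈ S.powersetCard (r + 1),
          ((t T - if i ∈ T then 1 else 0) + if i ∈ T then 1 else 0) :=
        Finset.sum_le_sum fun T _ => le_tsub_add
    _ ≤ (S.card - 1).choose r * g.totalDegree + (S.card - 1).choose r := by
        rw [Finset.sum_add_distrib, ← Finset.card_filter, card_powersetCard_filter_mem hi]
        exact Nat.add_le_add_right (ih _ (by omega) hg0 hg rfl) _
    _ = (S.card - 1).choose r * (ℓ i * g).totalDegree := by rw [hdeg, mul_add, mul_one]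

theorem eq_zero_of_mem_span_image_pow_of_not_dvd {R : Type*} [CommSemiring R] {x : ι → R} {y : R}
    (hy : ∀ i ∈ S, ¬ x i ∣ y) {T : Finset ι} (hT : T ∈ S.powersetCard 1) {n : ℕ}
    (hyT : y ∈ Ideal.span (x '' (T : Set ι)) ^ n) : n = 0 := by
  obtain ⟨hTS, hTcard⟩ := Finset.mem_powersetCard.mp hT
  obtain ⟨i, rfl⟩ := Finset.card_eq_one.mp hTcard
  by_contra hn
  refine hy i (hTS (Finset.mem_singleton_self i)) ?_
  simpa [Ideal.mem_span_singleton] using Ideal.pow_le_self hn hyT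

theorem map_mem_span_image_pow {R R' F : Type*} [DecidableEq ι] [CommSemiring R]
    [CommSemiring R'] [FunLike F R R'] [RingHomClass F R R'] (φ : F) {x : ι → R} {i : ι}
    (hi : φ (x i) = 0) {T : Finset ι} {n : ℕ} {y : R}
    (hy : y ∈ Ideal.span (x '' (insert i T : Finset ι)) ^ n) :
    φ y ∈ Ideal.span ((φ ∘ x) '' (T : Set ι)) ^ n := by
  have hmap := Ideal.mem_map_of_mem φ hy
  rwa [Ideal.map_pow, Ideal.map_span, ← Set.image_comp, Finset.coe_insert, Set.image_insert_eq,
    Function.comp_apply, hi, Ideal.span_insert_zero] at hmap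

/-- The bound for `(r + 1)`-fold intersections is applied on the hyperplane `ℓ i = 0`, where the
remaining forms are still in general position. -/
theorem sum_multiplicities_insert_le_of_not_dvd [DecidableEq ι]
    (hℓ : ∀ i, (ℓ i).IsHomogeneous 1)
    (hgen : InGeneralPosition k ℓ S (r + 3))
    (hbound : ∀ {S : Finset ι} {ℓ : ι → MvPolynomial σ k} {t : Finset ι → ℕ}
      {f : MvPolynomial σ k}, (∀ i, (ℓ i).IsHomogeneous 1) → InGeneralPosition k ℓ S (r + 2) →
      f ≠ 0 → (∀ T ∈ S.powersetCard (r + 1), f ∈ Ideal.span (ℓ '' (T : Set ι)) ^ t T) →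
      ∑ T ∈ S.powersetCard (r + 1), t T ≤ (S.card - 1).choose r * f.totalDegree)
    {i : ι} (hi : i ∈ S) (hif : ¬ ℓ i ∣ f)
    (hf : ∀ T ∈ S.powersetCard (r + 2), f ∈ Ideal.span (ℓ '' (T : Set ι)) ^ t T) :
    ∑ T ∈ (S.erase i).powersetCard (r + 1), t (insert i T) ≤
      ((S.erase i).card - 1).choose r * f.totalDegree := by
  obtain ⟨q, hq⟩ := exists_isProj (Submodule.span k {ℓ i})
  have hA : ∀ a ∈ ({ℓ i} : Set (MvPolynomial σ k)), a.IsHomogeneous 1 := by simpa using hℓ i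
  have hzero (p) : flatRestriction q p = 0 ↔ ℓ i ∣ p :=
    (flatRestriction_eq_zero_iff hA hq).trans Ideal.mem_span_singleton
  have hgen' : InGeneralPosition k (flatRestriction q ∘ ℓ) (S.erase i) (r + 2) :=
    hgen.map_erase hi (flatRestriction q).toLinearMap fun w hw =>
      mem_span_of_flatRestriction_eq_zero hq
        (isHomogeneous_one_of_mem_span (Set.forall_mem_range.mpr hℓ) hw)
  have hmem : ∀ T ∈ (S.erase i).powersetCard (r + 1), flatRestriction q f ∈
      Ideal.span ((flatRestriction q ∘ ℓ) '' (T : Set ι)) ^ t (insert i T) := by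
    intro T hT
    obtain ⟨hTS, hTcard⟩ := Finset.mem_powersetCard.mp hT
    refine map_mem_span_image_pow (flatRestriction q) ((hzero _).mpr dvd_rfl) (hf _ ?_)
    have hiT : i ∉ T := fun h => Finset.notMem_erase i S (hTS h)
    rw [Finset.mem_powersetCard, Finset.card_insert_of_notMem hiT, hTcard]
    exact ⟨Finset.insert_subset hi (hTS.trans (Finset.erase_subset i S)), rfl⟩
  calc ∑ T ∈ (S.erase i).powersetCard (r + 1), t (insert i T)
      ≤ ((S.erase i).card - 1).choose r * (flatRestriction q f).totalDegree :=
        hbound (fun j => isHomogeneous_flatRestriction hA hq (hℓ j)) hgen'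
          (mt (hzero f).mp hif) hmem
    _ ≤ ((S.erase i).card - 1).choose r * f.totalDegree :=
        Nat.mul_le_mul_left _ (totalDegree_flatRestriction_le hA hq f)

theorem sum_multiplicities_le (hℓ : ∀ i, (ℓ i).IsHomogeneous 1)
    (hgen : InGeneralPosition k ℓ S (r + 2)) (hf0 : f ≠ 0)
    (hf : ∀ T ∈ S.powersetCard (r + 1), f ∈ Ideal.span (ℓ '' (T : Set ι)) ^ t T) :
    ∑ T ∈ S.powersetCard (r + 1), t T ≤ (S.card - 1).choose r * f.totalDegree := by
  classical
  induction r generalizing S ℓ t f with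
  | zero =>
    refine sum_multiplicities_le_of_forall_not_dvd hℓ hgen (fun t f hdvd hf => ?_) hf0 hf
    rw [Finset.sum_eq_zero fun T hT =>
      eq_zero_of_mem_span_image_pow_of_not_dvd hdvd hT (hf T hT)]
    exact Nat.zero_le _
  | succ r ih =>
    exact sum_multiplicities_le_of_forall_not_dvd hℓ hgen (fun t f hdvd hf =>
      sum_powersetCard_le_of_forall_erase fun i hi =>
        sum_multiplicities_insert_le_of_not_dvd hℓ hgen ih hi (hdvd i hi) hf) hf0 hf

end DegreeBound

section Alpha

variable {k σ : Type*} [Field k] {J : Ideal (MvPolynomial σ k)} {f : MvPolynomial σ k} {d : ℕ}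

theorem alpha_le (hf : f ∈ J)
    (hf0 : f ≠ 0) (hfd : f.IsHomogeneous d) : alpha J ≤ d :=
  Nat.sInf_le ⟨f, hf, hf0, hfd⟩

theorem exists_isHomogeneous_alpha (hf : f ∈ J) (hf0 : f ≠ 0) (hfd : f.IsHomogeneous d) :
    ∃ g ∈ J, g ≠ 0 ∧ g.IsHomogeneous (alpha J) :=
  Nat.sInf_mem (s := {d | ∃ g ∈ J, g ≠ 0 ∧ g.IsHomogeneous d}) ⟨d, f, hf, hf0, hfd⟩

end Alpha

section StarConfiguration

variable {k σ ι κ : Type*} [Field k] {ℓ : ι → MvPolynomial σ k} {e : ℕ}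

/-- The symbolic power `I^{(n)}` of the ideal `I` of the codimension-`e` star configuration of the
hyperplanes `ℓ i = 0`. -/
def starSymbolicPower (ℓ : ι → MvPolynomial σ k) (e n : ℕ) : Ideal (MvPolynomial σ k) :=
  ⨅ (T : Finset ι) (_ : T.card = e), Ideal.span (ℓ '' (T : Set ι)) ^ n

/-- The symbolic power `I(W_m)^{(n)}` of the scheme `W_m` consisting of the star configuration with
multiplicity `m` and of the subschemes with ideals `J j` and multiplicities `μ j`. -/
def fatFlatSymbolicPower (ℓ : ι → MvPolynomial σ k) (e m : ℕ) (J : κ → Ideal (MvPolynomial σ k))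
    (μ : κ → ℕ) (n : ℕ) : Ideal (MvPolynomial σ k) :=
  (⨅ j, J j ^ (n * μ j)) ⊓ starSymbolicPower ℓ e (n * m)

variable [Fintype ι]

theorem mul_card_le_mul_totalDegree_of_mem_starSymbolicPower (he : 1 ≤ e) (hes : e ≤ Fintype.card ι)
    (hℓ : ∀ i, (ℓ i).IsHomogeneous 1) (hgen : InGeneralPosition k ℓ Finset.univ (e + 1)) {n : ℕ}
    {f : MvPolynomial σ k} (hf0 : f ≠ 0) (hf : f ∈ starSymbolicPower ℓ e n) :
    n * Fintype.card ι ≤ e * f.totalDegree := by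
  classical
  obtain ⟨r, rfl⟩ := Nat.exists_eq_add_of_le' he
  obtain ⟨c, hc⟩ := Nat.exists_eq_add_of_le' (he.trans hes)
  simp only [starSymbolicPower, Ideal.mem_iInf] at hf
  have hsum : (c + 1).choose (r + 1) * n ≤ c.choose r * f.totalDegree := by
    simpa [hc] using sum_multiplicities_le (t := fun _ => n) hℓ hgen hf0
      fun T hT => hf T (Finset.mem_powersetCard.mp hT).2
  refine Nat.le_of_mul_le_mul_left ?_ (Nat.choose_pos (show r ≤ c by omega))
  calc c.choose r * (n * Fintype.card ι) = (c + 1) * c.choose r * n := by rw [hc]; ring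
    _ = (r + 1) * ((c + 1).choose (r + 1) * n) := by rw [Nat.add_one_mul_choose_eq]; ring
    _ ≤ (r + 1) * (c.choose r * f.totalDegree) := Nat.mul_le_mul_left _ hsum
    _ = c.choose r * ((r + 1) * f.totalDegree) := by ring

theorem prod_pow_mem_span_image_pow {R : Type*} [CommSemiring R] (x : ι → R) (T : Finset ι)
    (n : ℕ) : (∏ i, x i) ^ n ∈ Ideal.span (x '' (T : Set ι)) ^ (T.card * n) := by
  classical
  rw [pow_mul, ← Finset.prod_mul_prod_compl T x, ← Finset.prod_const]
  exact Ideal.pow_mem_pow (Ideal.mul_mem_right _ _ (Ideal.prod_mem_prod fun i hi =>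
    Ideal.subset_span (Set.mem_image_of_mem x hi))) n

theorem prod_pow_mem_fatFlatSymbolicPower {J : κ → Ideal (MvPolynomial σ k)}
    (hJ : ∀ j, ∃ i, ℓ i ∈ J j) {m n d : ℕ} {μ : κ → ℕ} (hm : n * m ≤ e * d)
    (hμ : ∀ j, n * μ j ≤ d) : (∏ i, ℓ i) ^ d ∈ fatFlatSymbolicPower ℓ e m J μ n := by
  simp only [fatFlatSymbolicPower, starSymbolicPower, Ideal.mem_inf, Ideal.mem_iInf]
  refine ⟨fun j => ?_, fun T hT => ?_⟩
  · obtain ⟨i, hi⟩ := hJ j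
    exact Ideal.pow_le_pow_right (hμ j) (Ideal.pow_mem_pow
      (Ideal.mem_of_dvd _ (Finset.dvd_prod_of_mem ℓ (Finset.mem_univ i)) hi) d)
  · exact Ideal.pow_le_pow_right (hT ▸ hm) (prod_pow_mem_span_image_pow ℓ T d)

theorem isHomogeneous_prod_pow (hℓ : ∀ i, (ℓ i).IsHomogeneous 1) (d : ℕ) :
    ((∏ i, ℓ i) ^ d).IsHomogeneous (Fintype.card ι * d) := by
  simpa using (IsHomogeneous.prod Finset.univ ℓ (fun _ => 1) fun i _ => hℓ i).pow d

theorem alpha_fatFlatSymbolicPower_le (hℓ : ∀ i, (ℓ i).IsHomogeneous 1) (hℓ0 : ∀ i, ℓ i ≠ 0)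
    {J : κ → Ideal (MvPolynomial σ k)} (hJ : ∀ j, ∃ i, ℓ i ∈ J j) {m : ℕ} {μ : κ → ℕ}
    (hμ : ∀ j, μ j ≤ m / e) :
    alpha (fatFlatSymbolicPower ℓ e m J μ e) ≤ Fintype.card ι * m :=
  alpha_le
    (prod_pow_mem_fatFlatSymbolicPower hJ le_rfl fun j =>
      (Nat.mul_le_mul_left e (hμ j)).trans (Nat.mul_div_le m e))
    (pow_ne_zero _ (Finset.prod_ne_zero_iff.mpr fun i _ => hℓ0 i)) (isHomogeneous_prod_pow hℓ m)

theorem mul_card_le_mul_alpha_fatFlatSymbolicPower (he : 1 ≤ e) (hes : e ≤ Fintype.card ι)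
    (hℓ : ∀ i, (ℓ i).IsHomogeneous 1) (hgen : InGeneralPosition k ℓ Finset.univ (e + 1))
    {J : κ → Ideal (MvPolynomial σ k)} (hJ : ∀ j, ∃ i, ℓ i ∈ J j) {m : ℕ} {μ : κ → ℕ}
    (hμ : ∀ j, μ j ≤ m) (n : ℕ) :
    n * m * Fintype.card ι ≤ e * alpha (fatFlatSymbolicPower ℓ e m J μ n) := by
  have hprod : (∏ i, ℓ i) ^ (n * m) ∈ fatFlatSymbolicPower ℓ e m J μ n :=
    prod_pow_mem_fatFlatSymbolicPower hJ (Nat.le_mul_of_pos_left _ he)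
      fun j => Nat.mul_le_mul_left n (hμ j)
  obtain ⟨f, hf, hf0, hfd⟩ := exists_isHomogeneous_alpha hprod
    (pow_ne_zero _ (Finset.prod_ne_zero_iff.mpr fun i hi => hgen.ne_zero hi))
    (isHomogeneous_prod_pow hℓ (n * m))
  rw [← hfd.totalDegree hf0]
  exact mul_card_le_mul_totalDegree_of_mem_starSymbolicPower he hes hℓ hgen hf0 hf.2

theorem waldschmidt_fat_flat_subscheme_general (he : 1 ≤ e) (hes : e ≤ Fintype.card ι)
    (hℓ : ∀ i, (ℓ i).IsHomogeneous 1) (hgen : InGeneralPosition k ℓ Finset.univ (e + 1))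
    {J : κ → Ideal (MvPolynomial σ k)} (hJ : ∀ j, ∃ i, ℓ i ∈ J j) {m : ℕ} {μ : κ → ℕ}
    (hμ : ∀ j, μ j ≤ m / e) :
    ⨅ n : ℕ+, (alpha (fatFlatSymbolicPower ℓ e m J μ n) : ℝ) / ((n : ℕ) : ℝ) =
      (m : ℝ) * (Fintype.card ι : ℝ) / (e : ℝ) := by
  have he0 : (0 : ℝ) < e := by exact_mod_cast he
  apply le_antisymm
  · refine (ciInf_le ⟨0, Set.forall_mem_range.mpr fun n => by positivity⟩ ⟨e, he⟩).trans ?_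
    have hℓ0 (i) : ℓ i ≠ 0 := hgen.ne_zero (Finset.mem_univ i)
    have hupper := alpha_fatFlatSymbolicPower_le hℓ hℓ0 hJ hμ
    rw [PNat.mk_coe, mul_comm (m : ℝ)]
    gcongr
    exact_mod_cast hupper
  · refine le_ciInf fun n => ?_
    have hn0 : (0 : ℝ) < (n : ℕ) := by exact_mod_cast n.pos
    have hlower := mul_card_le_mul_alpha_fatFlatSymbolicPower he hes hℓ hgen hJ
      (fun j => (hμ j).trans (Nat.div_le_self m e)) n
    rw [div_le_div_iff₀ he0 hn0, mul_comm _ (e : ℝ), mul_right_comm, mul_comm (m : ℝ)]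
    exact_mod_cast hlower

end StarConfiguration

/-- Let `W_m = W' + m S_N(e,s)` be a fat flat subscheme of `ℙ^N` as in the
construction: `I` is the star configuration ideal built from `s` linear forms in general
position with `1 ≤ e ≤ min(N,s)`; the extra components `M_j` (for `j : Fin t`, here flattened
over all codimensions) are linear subspaces of codimension `c j` with `2 ≤ c j ≤ N`, cut out
by linearly independent linear forms `v j`, each `M_j` contained in one of the hyperplanes
`H_i = {ℓ i = 0}` (i.e. `ℓ i ∈ span (range (v j))`), none of the subspaces `M_j` and the
star-configuration components contains another, and the multiplicities satisfy
`0 ≤ μ j ≤ ⌊m / e⌋`.  The `k`-th symbolic power of `I(W_m)` is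
`(⋂_j I(M_j)^{k·μ j}) ∩ I^{(km)}`.  Then the Waldschmidt constant of `I(W_m)` is `m s / e`. -/
theorem waldschmidt_fat_flat_subscheme
    {kk : Type*} [Field kk] [IsAlgClosed kk]
    (N s e : ℕ) (he : 1 ≤ e) (heN : e ≤ N) (hes : e ≤ s)
    (ℓ : Fin s → MvPolynomial (Fin (N + 1)) kk)
    (hdeg : ∀ i, (ℓ i).IsHomogeneous 1)
    (hgen : ∀ T : Finset (Fin s), T.card ≤ N + 1 →
      LinearIndependent kk (fun i : T => ℓ (i : Fin s)))
    (m : ℕ) (hm : 1 ≤ m)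
    -- the additional linear subspaces `M_j`, of codimension `c j`, cut out by the
    -- linearly independent linear forms `v j 0, …, v j (c j - 1)`
    (t : ℕ) (c : Fin t → ℕ) (hc2 : ∀ j, 2 ≤ c j) (hcN : ∀ j, c j ≤ N)
    (v : (j : Fin t) → Fin (c j) → MvPolynomial (Fin (N + 1)) kk)
    (hv1 : ∀ j i, (v j i).IsHomogeneous 1)
    (hvind : ∀ j, LinearIndependent kk (v j))
    -- each `M_j` is contained in one of the hyperplanes `H_i`
    (hsub : ∀ j, ∃ i : Fin s, ℓ i ∈ Ideal.span (Set.range (v j)))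
    -- no one of the subspaces `M_j` contains another
    (hinc : ∀ j j', j ≠ j' →
      ¬ Ideal.span (Set.range (v j)) ≤ Ideal.span (Set.range (v j')))
    -- no containment between any `M_j` and any component of the star configuration
    (hincStar : ∀ j, ∀ T : Finset (Fin s), T.card = e →
      ¬ Ideal.span (Set.range (v j)) ≤ Ideal.span (ℓ '' (T : Set (Fin s))) ∧
      ¬ Ideal.span (ℓ '' (T : Set (Fin s))) ≤ Ideal.span (Set.range (v j)))
    -- the multiplicities, with `0 ≤ μ j ≤ ⌊m / e⌋`
    (μ : Fin t → ℕ) (hμ : ∀ j, μ j ≤ m / e) :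
    ⨅ k : ℕ+, (alpha
        ((⨅ j : Fin t, (Ideal.span (Set.range (v j))) ^ ((k : ℕ) * μ j)) ⊓
          ⨅ (T : Finset (Fin s)) (_ : T.card = e),
            (Ideal.span (ℓ '' (T : Set (Fin s)))) ^ ((k : ℕ) * m)) : ℝ) / ((k : ℕ) : ℝ)
      = ((m : ℝ) * (s : ℝ)) / (e : ℝ) := by
  exact (waldschmidt_fat_flat_subscheme_general he (by simpa using hes) hdeg
    (fun T _ hT => hgen T (by omega)) hsub hμ).trans (by rw [Fintype.card_fin])
end
end

section
/- Let a and b be integers with 1 ≤ a < b. Then there exist an integer M and a fat flat subscheme W of P^M, i.e. finitely many pairwise incomparable linear subspaces V_1,…,V_t of P^M with positive multiplicities a_1,…,a_t and defining ideal I(W) = ⋂_i I(V_i)^{a_i}, such that the Waldschmidt constant of I(W) equals b/a. -/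
noncomputable section

open MvPolynomial

/-!
Let `V_s`, for each `a`-element set `s` of the `b` coordinates, be the coordinate flat
`x_i = 0` (`i ∈ s`). The product of all the coordinates has degree `b` and vanishes to order `a`
along every `V_s`, so the Waldschmidt constant is at most `b / a`. Conversely, let `x^m` be a
monomial of a form of degree `d` vanishing to order `k` along every `V_s`. Then
`k ≤ ∑ i ∈ s, m i` for every `s`, and summing over all `s` counts each exponent equally often,
which gives `k * b ≤ a * d`.
-/

open scoped Finset

section WaldschmidtConstant

variable {kk σ ι : Type*} [Field kk]

/-- The Waldschmidt constant of the fat scheme with components `I j` of multiplicity `mult j`,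
whose `k`-th symbolic power is encoded as `⨅ j, I j ^ (k * mult j)`. -/
def waldschmidt (I : ι → Ideal (MvPolynomial σ kk)) (mult : ι → ℕ) : ℝ :=
  ⨅ k : ℕ+, (alpha (⨅ j, I j ^ ((k : ℕ) * mult j)) : ℝ) / ((k : ℕ) : ℝ)

theorem alpha_le_s6 {J : Ideal (MvPolynomial σ kk)} {f : MvPolynomial σ kk} {d : ℕ}
    (hfJ : f ∈ J) (hf₀ : f ≠ 0) (hfd : f.IsHomogeneous d) : alpha J ≤ d :=
  Nat.sInf_le ⟨f, hfJ, hf₀, hfd⟩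

theorem exists_mem_isHomogeneous_alpha {J : Ideal (MvPolynomial σ kk)}
    (hJ : ∃ d, ∃ f ∈ J, f ≠ 0 ∧ f.IsHomogeneous d) :
    ∃ f ∈ J, f ≠ 0 ∧ f.IsHomogeneous (alpha J) :=
  Nat.sInf_mem hJ

theorem waldschmidt_le_div {I : ι → Ideal (MvPolynomial σ kk)} {mult : ι → ℕ}
    {f : MvPolynomial σ kk} {k d : ℕ} (hk : 0 < k) (hfI : ∀ j, f ∈ I j ^ (k * mult j))
    (hf₀ : f ≠ 0) (hfd : f.IsHomogeneous d) : waldschmidt I mult ≤ d / k := by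
  have bddBelow : BddBelow (Set.range fun k : ℕ+ =>
      (alpha (⨅ j, I j ^ ((k : ℕ) * mult j)) : ℝ) / ((k : ℕ) : ℝ)) :=
    ⟨0, Set.forall_mem_range.2 fun _ => by positivity⟩
  refine (ciInf_le bddBelow ⟨k, hk⟩).trans ?_
  rw [PNat.mk_coe]
  gcongr
  exact alpha_le_s6 (Ideal.mem_iInf.2 hfI) hf₀ hfd

theorem le_waldschmidt {I : ι → Ideal (MvPolynomial σ kk)} {mult : ι → ℕ} {c : ℝ}
    (hI : ∀ k : ℕ, ∃ d, ∃ f ∈ ⨅ j, I j ^ (k * mult j), f ≠ 0 ∧ f.IsHomogeneous d)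
    (hc : ∀ (k d : ℕ), ∀ f ∈ ⨅ j, I j ^ (k * mult j), f ≠ 0 → f.IsHomogeneous d → c * k ≤ d) :
    c ≤ waldschmidt I mult := by
  refine le_ciInf fun k => ?_
  obtain ⟨f, hfI, hf₀, hfd⟩ := exists_mem_isHomogeneous_alpha (hI k)
  rw [le_div_iff₀ (Nat.cast_pos.2 k.pos)]
  exact hc k _ f hfI hf₀ hfd

end WaldschmidtConstant

section CoordinateFlatIdeal

variable {R σ ι : Type*} [CommSemiring R]

variable (R) in
/-- The ideal of the coordinate flat on which the coordinates `x_i`, `i ∈ s`, vanish. -/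
def coordinateFlatIdeal (s : Finset σ) : Ideal (MvPolynomial σ R) :=
  Ideal.span (X '' s)

theorem X_mem_coordinateFlatIdeal {s : Finset σ} {i : σ} (hi : i ∈ s) :
    X i ∈ coordinateFlatIdeal R s :=
  Ideal.subset_span (Set.mem_image_of_mem X hi)

theorem coordinateFlatIdeal_le_iff [Nontrivial R] {s t : Finset σ} :
    coordinateFlatIdeal R s ≤ coordinateFlatIdeal R t ↔ s ⊆ t := by
  refine ⟨fun h i hi => ?_, fun h => Ideal.span_mono (Set.image_mono h)⟩
  obtain ⟨i', hi', hne⟩ := mem_ideal_span_X_image.1 (h (X_mem_coordinateFlatIdeal hi))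
    (Finsupp.single i 1) (by simp)
  rwa [(Finsupp.single_apply_ne_zero.1 hne).1] at hi'

theorem span_range_X_orderEmbOfFin [LinearOrder σ] (s : Finset σ) {n : ℕ} (hs : #s = n) :
    Ideal.span (Set.range fun i => (X (s.orderEmbOfFin hs i) : MvPolynomial σ R)) =
      coordinateFlatIdeal R s := by
  rw [coordinateFlatIdeal, ← Finset.range_orderEmbOfFin s hs, ← Set.range_comp]
  rfl

theorem one_le_sum_of_mem_coordinateFlatIdeal {s : Finset σ} {f : MvPolynomial σ R}
    (hf : f ∈ coordinateFlatIdeal R s) {m : σ →₀ ℕ} (hm : m ∈ f.support) :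
    1 ≤ ∑ i ∈ s, m i := by
  obtain ⟨i, hi, hmi⟩ := mem_ideal_span_X_image.1 hf m hm
  exact (Nat.one_le_iff_ne_zero.2 hmi).trans (Finset.single_le_sum_of_canonicallyOrdered hi)

theorem le_sum_of_mem_coordinateFlatIdeal_pow {s : Finset σ} {n : ℕ} {f : MvPolynomial σ R}
    (hf : f ∈ coordinateFlatIdeal R s ^ n) {m : σ →₀ ℕ} (hm : m ∈ f.support) :
    n ≤ ∑ i ∈ s, m i := by
  classical
  induction n generalizing f m with
  | zero => exact Nat.zero_le _
  | succ n ih =>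
    rw [pow_succ] at hf
    induction hf using Submodule.mul_induction_on' generalizing m with
    | mem_mul_mem g hg h hh =>
      obtain ⟨u, hu, w, hw, rfl⟩ := Finset.mem_add.1 (support_mul g h hm)
      simpa only [Finsupp.add_apply, Finset.sum_add_distrib] using
        add_le_add (ih hg hu) (one_le_sum_of_mem_coordinateFlatIdeal hh hw)
    | add g _ h _ ihg ihh =>
      exact (Finset.mem_union.1 (support_add hm)).elim ihg ihh

theorem prod_X_mem_coordinateFlatIdeal_pow_card [Fintype σ] (s : Finset σ) :
    ∏ i, X i ∈ coordinateFlatIdeal R s ^ #s := by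
  have prod_mem : ∏ i ∈ s, X i ∈ coordinateFlatIdeal R s ^ #s := by
    rw [← Finset.prod_const]
    exact Ideal.prod_mem_prod fun i hi => X_mem_coordinateFlatIdeal hi
  exact Ideal.mem_of_dvd _ (Finset.prod_dvd_prod_of_subset _ _ _ s.subset_univ) prod_mem

variable [Fintype ι] [DecidableEq σ] {S : ι → Finset σ} {r : ℕ}

theorem sum_sum_le_mul_degree (hr : ∀ i, #{j | i ∈ S j} ≤ r) (m : σ →₀ ℕ) :
    ∑ j, ∑ i ∈ S j, m i ≤ r * m.degree := by
  have sum_eq (j : ι) : ∑ i ∈ S j, m i = ∑ i ∈ m.support with i ∈ S j, m i := by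
    rw [Finset.filter_mem_eq_inter, Finset.inter_comm]
    refine (Finset.sum_subset Finset.inter_subset_left fun i hi hi' => ?_).symm
    simpa [hi] using hi'
  calc ∑ j, ∑ i ∈ S j, m i
      = ∑ i ∈ m.support, #{j | i ∈ S j} * m i := by
        simp_rw [sum_eq, Finset.sum_filter, Finset.card_filter, Finset.sum_mul, ite_mul, one_mul,
          zero_mul]
        exact Finset.sum_comm
    _ ≤ ∑ i ∈ m.support, r * m i := by gcongr; exact hr _
    _ = r * m.degree := by rw [Finsupp.degree_apply, Finset.mul_sum]

theorem sum_le_mul_of_mem_iInf_coordinateFlatIdeal_pow (hr : ∀ i, #{j | i ∈ S j} ≤ r)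
    {n : ι → ℕ} {f : MvPolynomial σ R} {d : ℕ} (hf : f ∈ ⨅ j, coordinateFlatIdeal R (S j) ^ n j)
    (hf₀ : f ≠ 0) (hfd : f.IsHomogeneous d) : ∑ j, n j ≤ r * d := by
  obtain ⟨m, hm⟩ := support_nonempty.2 hf₀
  calc ∑ j, n j
      ≤ ∑ j, ∑ i ∈ S j, m i := Finset.sum_le_sum fun j _ =>
        le_sum_of_mem_coordinateFlatIdeal_pow (Ideal.mem_iInf.1 hf j) hm
    _ ≤ r * m.degree := sum_sum_le_mul_degree hr m
    _ = r * d := by rw [hfd.degree_eq_sum_deg_support hm, Finsupp.degree_apply]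

end CoordinateFlatIdeal

section CoordinateFlats

variable {kk σ ι : Type*} [Field kk] {S : ι → Finset σ}

theorem waldschmidt_coordinateFlatIdeal_le_card_div [Fintype σ] {a : ℕ} (ha : 0 < a)
    {mult : ι → ℕ} (hS : ∀ j, a * mult j ≤ #(S j)) :
    waldschmidt (fun j => coordinateFlatIdeal kk (S j)) mult ≤ Fintype.card σ / a := by
  refine waldschmidt_le_div (f := ∏ i, X i) ha
    (fun j => Ideal.pow_le_pow_right (hS j) (prod_X_mem_coordinateFlatIdeal_pow_card (S j)))
    (Finset.prod_ne_zero_iff.2 fun i _ => X_ne_zero i) ?_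
  simpa using IsHomogeneous.prod Finset.univ X (fun _ : σ => 1) fun i _ => isHomogeneous_X kk i

theorem exists_isHomogeneous_mem_iInf_coordinateFlatIdeal_pow [Finite ι]
    (hS : ∀ j, (S j).Nonempty) (n : ι → ℕ) :
    ∃ d, ∃ f ∈ ⨅ j, coordinateFlatIdeal kk (S j) ^ n j, f ≠ 0 ∧ f.IsHomogeneous d := by
  have := Fintype.ofFinite ι
  choose i hi using hS
  refine ⟨_, ∏ j, X (i j) ^ n j, Ideal.mem_iInf.2 fun j => ?_,
    Finset.prod_ne_zero_iff.2 fun j _ => pow_ne_zero _ (X_ne_zero (i j)),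
    IsHomogeneous.prod _ _ _ fun j _ => isHomogeneous_X_pow (i j) (n j)⟩
  exact Ideal.mem_of_dvd _ (Finset.dvd_prod_of_mem _ (Finset.mem_univ j))
    (Ideal.pow_mem_pow (X_mem_coordinateFlatIdeal (hi j)) _)

variable [Fintype ι] [DecidableEq σ]

theorem sum_div_le_waldschmidt_coordinateFlatIdeal (hS : ∀ j, (S j).Nonempty) {r : ℕ}
    (hr : ∀ i, #{j | i ∈ S j} ≤ r) (mult : ι → ℕ) :
    (∑ j, mult j : ℕ) / (r : ℝ) ≤ waldschmidt (fun j => coordinateFlatIdeal kk (S j)) mult := by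
  refine le_waldschmidt
    (fun k => exists_isHomogeneous_mem_iInf_coordinateFlatIdeal_pow hS fun j => k * mult j)
    fun k d f hf hf₀ hfd => ?_
  have mul_sum_le : k * ∑ j, mult j ≤ r * d := by
    rw [Finset.mul_sum]
    exact sum_le_mul_of_mem_iInf_coordinateFlatIdeal_pow hr hf hf₀ hfd
  rw [div_mul_eq_mul_div]
  refine div_le_of_le_mul₀ (by positivity) (by positivity) ?_
  rw [mul_comm, mul_comm (d : ℝ)]
  exact_mod_cast mul_sum_le

theorem waldschmidt_coordinateFlatIdeal_of_uniform_of_regular [Fintype σ] [Nonempty ι] {a r : ℕ}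
    (ha : 0 < a) (hS : ∀ j, #(S j) = a) (hr : ∀ i, #{j | i ∈ S j} = r) :
    waldschmidt (fun j => coordinateFlatIdeal kk (S j)) (fun _ => 1) = Fintype.card σ / a := by
  have card_mul_eq : Fintype.card ι * a = Fintype.card σ * r := by
    simpa [Finset.bipartiteAbove, Finset.bipartiteBelow, hS, hr] using
      Finset.sum_card_bipartiteAbove_eq_sum_card_bipartiteBelow (s := Finset.univ)
        (t := Finset.univ) fun j i => i ∈ S j
  have r_pos : 0 < r :=
    Nat.pos_of_mul_pos_left (card_mul_eq ▸ Nat.mul_pos Fintype.card_pos ha)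
  refine le_antisymm (waldschmidt_coordinateFlatIdeal_le_card_div ha fun j => by simp [hS]) ?_
  calc (Fintype.card σ : ℝ) / a
      = (∑ _ : ι, 1 : ℕ) / (r : ℝ) := by
        rw [div_eq_div_iff (by positivity) (by positivity)]
        simpa using mod_cast card_mul_eq.symm
    _ ≤ waldschmidt (fun j => coordinateFlatIdeal kk (S j)) (fun _ => 1) :=
        sum_div_le_waldschmidt_coordinateFlatIdeal
          (fun j => Finset.card_pos.1 (by rwa [hS])) (fun i => (hr i).le) _

end CoordinateFlats

section StarConfiguration

variable {σ ι : Type*} [Fintype σ] {a : ℕ}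

theorem nonempty_powersetCard (haσ : a ≤ Fintype.card σ) : Nonempty (Set.powersetCard σ a) := by
  obtain ⟨s, -, hs⟩ := Finset.exists_subset_card_eq (s := (Finset.univ : Finset σ)) haσ
  exact ⟨⟨s, hs⟩⟩

theorem card_filter_mem_powersetCard [DecidableEq σ] [Fintype ι] (ha : 0 < a)
    (e : ι ≃ Set.powersetCard σ a) (i : σ) :
    #{j | i ∈ (e j : Finset σ)} = (Fintype.card σ - 1).choose (a - 1) := by
  have card_eq := Finset.card_filter_powersetCard_subset {i} Finset.univ a
    (Finset.subset_univ _) ((Finset.card_singleton i).trans_le ha)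
  simp only [Finset.singleton_subset_iff, Finset.card_univ, Finset.card_singleton] at card_eq
  rw [← card_eq]
  refine Finset.card_nbij (fun j => (e j : Finset σ)) (by simp [Set.MapsTo])
    (Subtype.val_injective.comp e.injective).injOn fun s hs => ?_
  simp only [Finset.coe_filter, Finset.mem_powersetCard_univ, Set.mem_ofPred_eq] at hs
  exact ⟨e.symm ⟨s, hs.1⟩, by simpa using hs.2, by simp⟩

theorem waldschmidt_coordinateFlatIdeal_powersetCard {kk : Type*} [Field kk] (ha : 0 < a)
    (haσ : a ≤ Fintype.card σ) (e : ι ≃ Set.powersetCard σ a) :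
    waldschmidt (fun j => coordinateFlatIdeal kk (e j : Finset σ)) (fun _ => 1) =
      Fintype.card σ / a := by
  classical
  have : Fintype ι := Fintype.ofEquiv _ e.symm
  have : Nonempty ι := (nonempty_powersetCard haσ).map e.symm
  exact waldschmidt_coordinateFlatIdeal_of_uniform_of_regular ha
    (fun j => Set.powersetCard.card_eq (e j)) (card_filter_mem_powersetCard ha e)

end StarConfiguration

theorem exists_fat_flat_subscheme_waldschmidt_eq_rat_general
    {kk : Type*} [Field kk]
    (a b : ℕ) (ha : 1 ≤ a) (hab : a < b) :
    ∃ (M : ℕ) (t : ℕ) (c : Fin t → ℕ)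
      (v : (j : Fin t) → Fin (c j) → MvPolynomial (Fin (M + 1)) kk)
      (mult : Fin t → ℕ),
      1 ≤ t ∧
      (∀ j, 1 ≤ c j ∧ c j ≤ M) ∧
      (∀ j i, (v j i).IsHomogeneous 1) ∧
      (∀ j, LinearIndependent kk (v j)) ∧
      (∀ j j', j ≠ j' →
        ¬ Ideal.span (Set.range (v j)) ≤ Ideal.span (Set.range (v j'))) ∧
      (∀ j, 1 ≤ mult j) ∧
      (⨅ k : ℕ+, (alpha (⨅ j : Fin t,
          (Ideal.span (Set.range (v j))) ^ ((k : ℕ) * mult j)) : ℝ) / ((k : ℕ) : ℝ)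
        = (b : ℝ) / (a : ℝ)) := by
  obtain ⟨M, rfl⟩ := Nat.exists_eq_add_one_of_ne_zero (Nat.ne_zero_of_lt hab)
  obtain ⟨t, ⟨e⟩⟩ := Finite.exists_equiv_fin (Set.powersetCard (Fin (M + 1)) a)
  have card_ge : a ≤ Fintype.card (Fin (M + 1)) := by simpa using hab.le
  have t_pos : 0 < t := Fin.pos_iff_nonempty.2 ((nonempty_powersetCard card_ge).map e)
  let S (j : Fin t) : Finset (Fin (M + 1)) := e.symm j
  have card_S (j : Fin t) : #(S j) = a := Set.powersetCard.card_eq (e.symm j)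
  refine ⟨M, t, fun _ => a, fun j i => X ((S j).orderEmbOfFin (card_S j) i), fun _ => 1,
    t_pos, fun _ => ⟨ha, Nat.lt_succ_iff.1 hab⟩, fun _ _ => isHomogeneous_X _ _, fun j => ?_,
    fun j j' hjj' hle => hjj' ?_, fun _ => le_rfl, ?_⟩
  · exact (linearIndependent_X _ kk).comp _ ((S j).orderEmbOfFin (card_S j)).injective
  · simp only [span_range_X_orderEmbOfFin, coordinateFlatIdeal_le_iff] at hle
    exact e.symm.injective (Set.powersetCard.eq_iff_subset.2 hle)
  · simp only [span_range_X_orderEmbOfFin]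
    simpa only [Fintype.card_fin, waldschmidt] using
      waldschmidt_coordinateFlatIdeal_powersetCard (kk := kk) ha card_ge e.symm

/-- Let `a` and `b` be integers with `1 ≤ a < b`.  Then there exist an
integer `M` and a fat flat subscheme `W` of `ℙ^M`: finitely many pairwise incomparable
linear subspaces `V_1, …, V_t` (here `V_j` has codimension `c j` and is cut out by the
linearly independent linear forms `v j 0, …`) with positive multiplicities `a_1, …, a_t`
and defining ideal `I(W) = ⋂_j I(V_j)^{a_j}`, whose `k`-th symbolic power is
`⋂_j I(V_j)^{k·a_j}`, such that the Waldschmidt constant of `I(W)` equals `b / a`. -/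
theorem exists_fat_flat_subscheme_waldschmidt_eq_rat
    {kk : Type*} [Field kk] [IsAlgClosed kk]
    (a b : ℕ) (ha : 1 ≤ a) (hab : a < b) :
    ∃ (M : ℕ) (t : ℕ) (c : Fin t → ℕ)
      (v : (j : Fin t) → Fin (c j) → MvPolynomial (Fin (M + 1)) kk)
      (mult : Fin t → ℕ),
      1 ≤ t ∧
      (∀ j, 1 ≤ c j ∧ c j ≤ M) ∧
      (∀ j i, (v j i).IsHomogeneous 1) ∧
      (∀ j, LinearIndependent kk (v j)) ∧
      (∀ j j', j ≠ j' →
        ¬ Ideal.span (Set.range (v j)) ≤ Ideal.span (Set.range (v j'))) ∧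
      (∀ j, 1 ≤ mult j) ∧
      (⨅ k : ℕ+, (alpha (⨅ j : Fin t,
          (Ideal.span (Set.range (v j))) ^ ((k : ℕ) * mult j)) : ℝ) / ((k : ℕ) : ℝ)
        = (b : ℝ) / (a : ℝ)) :=
  exists_fat_flat_subscheme_waldschmidt_eq_rat_general a b ha hab
end
end
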